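/- Fix a sample S = (s_1,…,s_m) and let δ ∈ (0,1). Let σ be an n×m random matrix whose entries are independent uniform Rademacher (±1) random variables. With probability at least 1 − δ over σ, R̂(F,S) ≤ R̂ⁿ_m(F,S,σ) + 2 ẑ(S) ln(1/δ)/(n m) + sqrt( ( 2 ẑ(S) ln(1/δ)/(n m) )² + 4 ( ẑ(S) R̂ⁿ_m(F,S,σ) + σ̂²_F(S) ) ln(1/δ)/(n m) ). -/

import Mathlib

/-!
Let `Z(σ) = n m R̂ⁿ_m(F,S,σ) ≥ 0` be viewed as a function on the cube `{±1}^{nm}`, with mean `E`.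
The claim follows from the lower tail bound `P(Z < E - t) ≤ exp(-t² / (4 (ẑ E + v)))` with
`v = n m σ̂²_F(S)`: taking the exponent equal to `ln(1/δ)`, outside an event of probability `δ`
one has `(E - Z)² ≤ 4 (ẑ E + v) ln(1/δ)` or `E ≤ Z`, and solving this quadratic inequality for `E`
gives the stated bound.

The tail bound is proved by the entropy method. A near-maximiser of a row shows that flipping one
entry decreases `Z` by at most `2 ẑ`, and that the squares of all these decreases sum to at most
`4 v` (`row_jump_le`, `row_sum_sq_jump_le`). Subadditivity of entropy (`entropy_subadditive`)
reduces the entropy of `e^{-μZ}` to two-point entropies along the edges of the cube. Each of them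
is charged to the endpoint where `Z` is larger (`two_point_entropy`), so that only decreases of
`Z` enter, and one gets (`entropy_exp_bound`)
`Ent(e^{-μZ}) ≤ v μ² / (1 - μ ẑ)² · E[e^{-μZ}]` for `μ ẑ < 1`.
Herbst's argument turns this into `log E[e^{-μ(Z-E)}] ≤ v μ² / (1 - μ ẑ)` (`laplace_bound`), and
Chernoff's bound yields a tail `exp(-t² / (4 (v + ẑ t)))`. Since `Z ≥ 0`, only `t ≤ E` is
relevant, which replaces `ẑ t` by `ẑ E` (`lower_tail`).

All of this is done with sums over the finite cube; entropies and Laplace transforms are therefore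
unnormalised.
-/

open MeasureTheory

noncomputable section

/-- Map a Boolean to a `±1` sign: `true ↦ 1`, `false ↦ -1`. -/
def sgnB (x : Bool) : ℝ := if x then 1 else -1

/-- The `n`-Monte-Carlo Empirical Rademacher Average
`R̂ⁿ_m(F,S,σ) = (1/n) Σ_j sup_{f∈F} (1/m) Σ_i σ_{j,i} f(s_i)`. -/
def mcera {X ι : Type*} (f : ι → X → ℝ) (n m : ℕ) (S : Fin m → X)
    (σ : Fin n → Fin m → Bool) : ℝ :=
  (n : ℝ)⁻¹ * ∑ j : Fin n, ⨆ l : ι, (m : ℝ)⁻¹ * ∑ k : Fin m, sgnB (σ j k) * f l (S k)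

/-- Uniform measure on `n × m` sign matrices: the entries are independent
uniform Rademacher (±1) random variables. -/
def radMeasure (n m : ℕ) : Measure (Fin n → Fin m → Bool) :=
  (PMF.uniformOfFintype (Fin n → Fin m → Bool)).toMeasure

/-- The Empirical Rademacher Average `R̂(F,S) = E_σ[R̂ⁿ_m(F,S,σ)]`. -/
def era {X ι : Type*} (f : ι → X → ℝ) (n m : ℕ) (S : Fin m → X) : ℝ :=
  ∫ σ, mcera f n m S σ ∂(radMeasure n m)

/-- The Rademacher Complexity `R(F,m) = E_S[R̂(F,S)]`, `S` being `m` i.i.d. samples. -/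
def rc {X ι : Type*} [MeasurableSpace X] (f : ι → X → ℝ) (n m : ℕ) (μ : Measure X) : ℝ :=
  ∫ S : Fin m → X, era f n m S ∂(Measure.pi fun _ : Fin m => μ)

/-- `ẑ(S) = sup_{f∈F, 1≤i≤m} |f(s_i)|`. -/
def zhat {X ι : Type*} (f : ι → X → ℝ) {m : ℕ} (S : Fin m → X) : ℝ :=
  ⨆ p : ι × Fin m, |f p.1 (S p.2)|

/-- `ν̂_F(S) = (1/m) sup_{f∈F} Σ_i |f(s_i)|`. -/
def nuhat {X ι : Type*} (f : ι → X → ℝ) {m : ℕ} (S : Fin m → X) : ℝ :=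
  (m : ℝ)⁻¹ * ⨆ l : ι, ∑ k : Fin m, |f l (S k)|

/-- The empirical wimpy variance `σ̂²_F(S) = (1/m) sup_{f∈F} Σ_i f(s_i)²`. -/
def sigma2hat {X ι : Type*} (f : ι → X → ℝ) {m : ℕ} (S : Fin m → X) : ℝ :=
  (m : ℝ)⁻¹ * ⨆ l : ι, ∑ k : Fin m, (f l (S k)) ^ 2

/-- The wimpy variance `σ²_F = sup_{f∈F} E_μ[f²]`. -/
def wimpyVar {X ι : Type*} [MeasurableSpace X] (f : ι → X → ℝ) (μ : Measure X) : ℝ :=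
  ⨆ l : ι, ∫ x, (f l x) ^ 2 ∂μ

/-- The positive supremum deviation `SD⁺(F,S) = sup_{f∈F} ((1/m)Σ_i f(s_i) - E_μ[f])`. -/
def sdPlus {X ι : Type*} [MeasurableSpace X] (f : ι → X → ℝ) (μ : Measure X)
    {m : ℕ} (S : Fin m → X) : ℝ :=
  ⨆ l : ι, ((m : ℝ)⁻¹ * ∑ k : Fin m, f l (S k) - ∫ x, f l x ∂μ)

/-- The negative supremum deviation `SD⁻(F,S) = sup_{f∈F} (E_μ[f] - (1/m)Σ_i f(s_i))`. -/
def sdMinus {X ι : Type*} [MeasurableSpace X] (f : ι → X → ℝ) (μ : Measure X)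
    {m : ℕ} (S : Fin m → X) : ℝ :=
  ⨆ l : ι, ((∫ x, f l x ∂μ) - (m : ℝ)⁻¹ * ∑ k : Fin m, f l (S k))

/-- `η_F = sup_{f∈F} E_μ[f] - a`. -/
def etaF {X ι : Type*} [MeasurableSpace X] (f : ι → X → ℝ) (μ : Measure X) (a : ℝ) : ℝ :=
  (⨆ l : ι, ∫ x, f l x ∂μ) - a

/-- `γ_F = b - inf_{f∈F} E_μ[f]`. -/
def gammaF {X ι : Type*} [MeasurableSpace X] (f : ι → X → ℝ) (μ : Measure X) (b : ℝ) : ℝ :=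
  b - ⨅ l : ι, ∫ x, f l x ∂μ

/-- `η̂_F(S) = sup_{f∈F} (1/m) Σ_i f(s_i) - a`. -/
def etahat {X ι : Type*} (f : ι → X → ℝ) {m : ℕ} (S : Fin m → X) (a : ℝ) : ℝ :=
  (⨆ l : ι, (m : ℝ)⁻¹ * ∑ k : Fin m, f l (S k)) - a

/-- `γ̂_F(S) = b - sup_{f∈F} (1/m) Σ_i f(s_i)`. -/
def gammahat {X ι : Type*} (f : ι → X → ℝ) {m : ℕ} (S : Fin m → X) (b : ℝ) : ℝ :=
  b - ⨆ l : ι, (m : ℝ)⁻¹ * ∑ k : Fin m, f l (S k)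

/-- `h(x) = (1+x) ln(1+x) - x`. -/
def hfun (x : ℝ) : ℝ := (1 + x) * Real.log (1 + x) - x

/-- `g(σ) = n m R̂ⁿ_m(F,S,σ) = Σ_j sup_{f∈F} Σ_i σ_{j,i} f(s_i)`. -/
def gup {X ι : Type*} (f : ι → X → ℝ) {n m : ℕ} (S : Fin m → X)
    (σ : Fin n → Fin m → Bool) : ℝ :=
  ∑ j : Fin n, ⨆ l : ι, ∑ k : Fin m, sgnB (σ j k) * f l (S k)

/-- `g_{j,i}(σ)`: infimum over `σ'_{j,i} ∈ {-1,1}` of `g` evaluated at `σ` with its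
`(j,i)` entry replaced by `σ'_{j,i}`. -/
def gji {X ι : Type*} (f : ι → X → ℝ) {n m : ℕ} (S : Fin m → X)
    (σ : Fin n → Fin m → Bool) (j : Fin n) (i : Fin m) : ℝ :=
  min (gup f S (Function.update σ j (Function.update (σ j) i true)))
      (gup f S (Function.update σ j (Function.update (σ j) i false)))

/-- `g(S) = m SD⁺(F,S) = sup_{f∈F} (Σ_i f(s_i) - m E_μ[f])`. -/
def gSDp {X ι : Type*} [MeasurableSpace X] (f : ι → X → ℝ) (μ : Measure X)
    {m : ℕ} (S : Fin m → X) : ℝ :=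
  ⨆ l : ι, (∑ k : Fin m, f l (S k) - m * ∫ x, f l x ∂μ)

/-- `g_i(S) = inf_{s'_i ∈ X} g(s_1,…,s_{i-1},s'_i,s_{i+1},…,s_m)` for `g = m SD⁺`. -/
def gSDpi {X ι : Type*} [MeasurableSpace X] (f : ι → X → ℝ) (μ : Measure X)
    {m : ℕ} (S : Fin m → X) (i : Fin m) : ℝ :=
  ⨅ s' : X, gSDp f μ (Function.update S i s')

/-- `g(S) = m SD⁻(F,S) = sup_{f∈F} (m E_μ[f] - Σ_i f(s_i))`. -/
def gSDm {X ι : Type*} [MeasurableSpace X] (f : ι → X → ℝ) (μ : Measure X)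
    {m : ℕ} (S : Fin m → X) : ℝ :=
  ⨆ l : ι, ((m : ℝ) * (∫ x, f l x ∂μ) - ∑ k : Fin m, f l (S k))

/-- `g_i(S) = inf_{s'_i ∈ X} g(s_1,…,s_{i-1},s'_i,s_{i+1},…,s_m)` for `g = m SD⁻`. -/
def gSDmi {X ι : Type*} [MeasurableSpace X] (f : ι → X → ℝ) (μ : Measure X)
    {m : ℕ} (S : Fin m → X) (i : Fin m) : ℝ :=
  ⨅ s' : X, gSDm f μ (Function.update S i s')

/-- `g(S) = m σ̂²_F(S) = sup_{f∈F} Σ_i f(s_i)²`. -/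
def gWv {X ι : Type*} (f : ι → X → ℝ) {m : ℕ} (S : Fin m → X) : ℝ :=
  ⨆ l : ι, ∑ k : Fin m, (f l (S k)) ^ 2

/-- `g_j(S) = sup_{f∈F} Σ_{i≠j} f(s_i)²`. -/
def gWvj {X ι : Type*} (f : ι → X → ℝ) {m : ℕ} (S : Fin m → X) (j : Fin m) : ℝ :=
  ⨆ l : ι, ∑ k ∈ Finset.univ.erase j, (f l (S k)) ^ 2

/-! ### Entropy on the discrete cube -/

/-- The sign vector `σ` with its `i`-th entry flipped. -/
def flipAt {N : ℕ} (σ : Fin N → Bool) (i : Fin N) : Fin N → Bool :=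
  Function.update σ i (!σ i)

lemma flipAt_flipAt {N : ℕ} (σ : Fin N → Bool) (i : Fin N) : flipAt (flipAt σ i) i = σ := by
  ext k
  by_cases h : k = i
  · subst h; simp [flipAt]
  · simp [flipAt, h]

lemma sum_flipAt {N : ℕ} (i : Fin N) (G : (Fin N → Bool) → ℝ) :
    ∑ σ, G (flipAt σ i) = ∑ σ, G σ :=
  Equiv.sum_comp (Function.Involutive.toPerm (fun σ => flipAt σ i)
    (fun σ => flipAt_flipAt σ i)) G

lemma sum_cube_succ {N : ℕ} (G : (Fin (N + 1) → Bool) → ℝ) :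
    ∑ σ, G σ =
      ∑ τ : Fin N → Bool, G (Fin.cons true τ) + ∑ τ : Fin N → Bool, G (Fin.cons false τ) := by
  rw [← Equiv.sum_comp (Fin.consEquiv (fun _ : Fin (N + 1) => Bool)) G, Fintype.sum_prod_type,
    Fintype.sum_bool]
  rfl

/-- Gibbs' inequality on two points: the logarithm of the density of `(x, y)` integrates against
`(x, y)` to at least as much as the logarithm of the density of any other pair `(g, h)`. -/
lemma two_point_gibbs {x y g h : ℝ} (hx : 0 < x) (hy : 0 < y) (hg : 0 < g) (hh : 0 < h) :
    x * (Real.log g - Real.log ((g + h) / 2)) + y * (Real.log h - Real.log ((g + h) / 2)) ≤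
    x * (Real.log x - Real.log ((x + y) / 2)) + y * (Real.log y - Real.log ((x + y) / 2)) := by
  have key : ∀ {u w : ℝ}, 0 < u → 0 < w →
      u * (Real.log w - Real.log ((g + h) / 2)) - u * (Real.log u - Real.log ((x + y) / 2)) ≤
        w * (x + y) / (g + h) - u := by
    intro u w hu hw
    have hq : 0 < w * (x + y) / (g + h) / u := by positivity
    have h1 := Real.log_le_sub_one_of_pos hq
    rw [show w * (x + y) / (g + h) / u = (w / ((g + h) / 2)) / (u / ((x + y) / 2)) by field_simp,
      Real.log_div (by positivity) (by positivity), Real.log_div hw.ne' (by positivity),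
      Real.log_div hu.ne' (by positivity)] at h1
    have h2 := mul_le_mul_of_nonneg_left h1 hu.le
    have h3 : u * ((w / ((g + h) / 2)) / (u / ((x + y) / 2)) - 1) = w * (x + y) / (g + h) - u := by
      field_simp
    linarith
  have h1 := key hx hg
  have h2 := key hy hh
  have h3 : g * (x + y) / (g + h) + h * (x + y) / (g + h) = x + y := by field_simp
  linarith

/-- Subadditivity of entropy on the cube, in unnormalised form: the entropy of `F` is at most
the sum over the coordinates of the entropies in that coordinate alone. -/
lemma entropy_subadditive : ∀ (N : ℕ) (F : (Fin N → Bool) → ℝ), (∀ σ, 0 < F σ) →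
    ∑ σ, F σ * Real.log (F σ) - (∑ σ, F σ) * Real.log ((∑ σ, F σ) / 2 ^ N) ≤
      ∑ σ, ∑ i, F σ * (Real.log (F σ) - Real.log ((F σ + F (flipAt σ i)) / 2)) := by
  intro N
  induction N with
  | zero => intro F hF; simp
  | succ N ih =>
    intro F hF
    have i1 := ih (fun τ => F (Fin.cons true τ)) (fun τ => hF _)
    have i0 := ih (fun τ => F (Fin.cons false τ)) (fun τ => hF _)
    have f0 : ∀ (b : Bool) (τ : Fin N → Bool),
        flipAt (Fin.cons b τ : Fin (N + 1) → Bool) 0 = Fin.cons (!b) τ := by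
      intro b τ
      simp only [flipAt, Fin.cons_zero]
      exact Fin.update_cons_zero (α := fun _ => Bool) b τ (!b)
    have fs : ∀ (b : Bool) (τ : Fin N → Bool) (i : Fin N),
        flipAt (Fin.cons b τ : Fin (N + 1) → Bool) i.succ = Fin.cons b (flipAt τ i) := by
      intro b τ i
      simp only [flipAt, Fin.cons_succ]
      exact (Fin.cons_update (α := fun _ => Bool) b τ i _).symm
    simp only [sum_cube_succ, Fin.sum_univ_succ, f0, fs, Finset.sum_add_distrib, Bool.not_true,
      Bool.not_false]
    set A := ∑ τ : Fin N → Bool, F (Fin.cons true τ) with hA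
    set B := ∑ τ : Fin N → Bool, F (Fin.cons false τ) with hB
    have hApos : 0 < A := Finset.sum_pos (fun τ _ => hF _) Finset.univ_nonempty
    have hBpos : 0 < B := Finset.sum_pos (fun τ _ => hF _) Finset.univ_nonempty
    have hg : A * (Real.log A - Real.log ((A + B) / 2)) + B * (Real.log B - Real.log ((A + B) / 2))
        ≤ ∑ τ : Fin N → Bool, F (Fin.cons true τ) * (Real.log (F (Fin.cons true τ)) -
            Real.log ((F (Fin.cons true τ) + F (Fin.cons false τ)) / 2)) +
          ∑ τ : Fin N → Bool, F (Fin.cons false τ) * (Real.log (F (Fin.cons false τ)) -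
            Real.log ((F (Fin.cons false τ) + F (Fin.cons true τ)) / 2)) := by
      have h := Finset.sum_le_sum (s := (Finset.univ : Finset (Fin N → Bool))) fun τ _ =>
        two_point_gibbs (hF (Fin.cons true τ)) (hF (Fin.cons false τ)) hApos hBpos
      rw [Finset.sum_add_distrib, Finset.sum_add_distrib, ← Finset.sum_mul, ← Finset.sum_mul] at h
      simpa only [add_comm (F (Fin.cons false _)) (F (Fin.cons true _))] using h
    have l1 : Real.log (A / 2 ^ N) = Real.log A - Real.log (2 ^ N) :=
      Real.log_div hApos.ne' (by positivity)
    have l2 : Real.log (B / 2 ^ N) = Real.log B - Real.log (2 ^ N) :=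
      Real.log_div hBpos.ne' (by positivity)
    have l3 : Real.log ((A + B) / 2 ^ (N + 1)) = Real.log ((A + B) / 2) - Real.log (2 ^ N) := by
      rw [← Real.log_div (by positivity) (by positivity)]
      congr 1
      rw [pow_succ]
      field_simp
    rw [l1] at i1
    rw [l2] at i0
    rw [l3]
    linarith

/-- Two-point entropy bound for `e^p` and `e^{p+2s}` in terms of `e^p` alone; it is used for
`s ≥ 0`, when `e^p` is the smaller value. The entropy is bounded by comparing with the geometric mean `e^{p+s}`, and the
resulting concave quadratic in `e^s` is maximal at `e^s = 1/(1-s)`. -/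
lemma two_point_entropy {p s : ℝ} (hs1 : s < 1) :
    Real.exp p * (p - Real.log ((Real.exp p + Real.exp (p + 2 * s)) / 2)) +
      Real.exp (p + 2 * s) *
        (p + 2 * s - Real.log ((Real.exp p + Real.exp (p + 2 * s)) / 2)) ≤
      Real.exp p * (s ^ 2 / (1 - s)) := by
  set u := Real.exp s with hu
  set x := Real.exp p with hx
  have hupos : 0 < u := Real.exp_pos _
  have hxpos : 0 < x := Real.exp_pos _
  have hy : Real.exp (p + 2 * s) = x * u ^ 2 := by
    rw [Real.exp_add, hu, ← Real.exp_nat_mul]; norm_num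
    rfl
  rw [hy]
  set A := (x + x * u ^ 2) / 2 with hA
  have hApos : 0 < A := by positivity
  have h1 := Real.log_le_sub_one_of_pos (show 0 < x * u / A by positivity)
  rw [Real.log_div (by positivity) (by positivity), Real.log_mul hxpos.ne' hupos.ne', hu, hx,
    Real.log_exp, Real.log_exp, ← hu, ← hx] at h1
  have h2 := mul_le_mul_of_nonneg_left h1 (show 0 ≤ 2 * A by positivity)
  have h3 : 2 * A * (x * u / A - 1) = 2 * (x * u) - 2 * A := by field_simp
  rw [h3] at h2
  have h4 : s * (u ^ 2 - 1) - (u - 1) ^ 2 ≤ s ^ 2 / (1 - s) := by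
    rw [le_div_iff₀ (by linarith)]
    nlinarith [sq_nonneg ((1 - s) * u - 1)]
  have h5 := mul_le_mul_of_nonneg_left h4 hxpos.le
  have h6 : 2 * A = x + x * u ^ 2 := by rw [hA]; ring
  rw [h6] at h2
  nlinarith

/-- Entropy of `e^{-μZ}` in terms of the squared downward jumps of `Z`. -/
lemma entropy_exp_bound {N : ℕ} (Z : (Fin N → Bool) → ℝ) {z v : ℝ}
    (hd : ∀ σ i, Z σ - Z (flipAt σ i) ≤ 2 * z)
    (hv : ∀ σ, ∑ i, (max (Z σ - Z (flipAt σ i)) 0) ^ 2 ≤ 4 * v)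
    (hz : 0 ≤ z) {μ : ℝ} (hμ : 0 < μ) (hμz : μ * z < 1) :
    ∑ σ, Real.exp (-μ * Z σ) * (-μ * Z σ) -
      (∑ σ, Real.exp (-μ * Z σ)) * Real.log ((∑ σ, Real.exp (-μ * Z σ)) / 2 ^ N) ≤
      v * μ ^ 2 / (1 - μ * z) ^ 2 * ∑ σ, Real.exp (-μ * Z σ) := by
  have h0 := entropy_subadditive N (fun σ => Real.exp (-μ * Z σ)) (fun σ => Real.exp_pos _)
  simp only [Real.log_exp] at h0
  refine h0.trans ?_
  set C := μ ^ 2 / (1 - μ * z) ^ 2 / 4 with hC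
  have h1z : 0 < 1 - μ * z := by linarith
  have hmz : 0 ≤ μ * z := by positivity
  -- The entropy along an edge of the cube is charged to the endpoint with the larger `Z`, so that
  -- only downward jumps appear.
  have pair : ∀ σ i,
      Real.exp (-μ * Z σ) *
        (-μ * Z σ - Real.log ((Real.exp (-μ * Z σ) + Real.exp (-μ * Z (flipAt σ i))) / 2)) +
      Real.exp (-μ * Z (flipAt σ i)) *
        (-μ * Z (flipAt σ i) -
          Real.log ((Real.exp (-μ * Z (flipAt σ i)) + Real.exp (-μ * Z σ)) / 2)) ≤
      Real.exp (-μ * Z σ) * (C * (max (Z σ - Z (flipAt σ i)) 0) ^ 2) +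
      Real.exp (-μ * Z (flipAt σ i)) * (C * (max (Z (flipAt σ i) - Z σ) 0) ^ 2) := by
    have main : ∀ a b : ℝ, b ≤ a → a - b ≤ 2 * z →
        Real.exp (-μ * a) * (-μ * a - Real.log ((Real.exp (-μ * a) + Real.exp (-μ * b)) / 2)) +
        Real.exp (-μ * b) * (-μ * b - Real.log ((Real.exp (-μ * b) + Real.exp (-μ * a)) / 2)) ≤
        Real.exp (-μ * a) * (C * (max (a - b) 0) ^ 2) +
        Real.exp (-μ * b) * (C * (max (b - a) 0) ^ 2) := by
      intro a b hab habz
      have hs0 : 0 ≤ μ * (a - b) / 2 := by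
        have : 0 ≤ a - b := by linarith
        positivity
      have hsz : μ * (a - b) / 2 ≤ μ * z := by nlinarith
      have h := two_point_entropy (p := -μ * a) (s := μ * (a - b) / 2) (by linarith)
      rw [show -μ * a + 2 * (μ * (a - b) / 2) = -μ * b by ring] at h
      rw [max_eq_left (by linarith), max_eq_right (by linarith),
        add_comm (Real.exp (-μ * b)) (Real.exp (-μ * a))]
      refine h.trans ?_
      rw [show Real.exp (-μ * b) * (C * 0 ^ 2) = 0 by ring, add_zero]
      refine mul_le_mul_of_nonneg_left ?_ (Real.exp_pos _).le
      calc (μ * (a - b) / 2) ^ 2 / (1 - μ * (a - b) / 2)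
          ≤ (μ * (a - b) / 2) ^ 2 / (1 - μ * z) ^ 2 := by
            apply div_le_div_of_nonneg_left (by positivity) (by positivity)
            nlinarith
        _ = C * (a - b) ^ 2 := by rw [hC]; ring
    intro σ i
    rcases le_total (Z (flipAt σ i)) (Z σ) with h | h
    · exact main _ _ h (hd σ i)
    · have h' := hd (flipAt σ i) i
      rw [flipAt_flipAt] at h'
      have := main _ _ h h'
      linarith
  have swap : ∀ i,
      ∑ σ, Real.exp (-μ * Z σ) *
        (-μ * Z σ - Real.log ((Real.exp (-μ * Z σ) + Real.exp (-μ * Z (flipAt σ i))) / 2)) ≤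
      ∑ σ, Real.exp (-μ * Z σ) * (C * (max (Z σ - Z (flipAt σ i)) 0) ^ 2) := by
    intro i
    have e1 := sum_flipAt i (fun σ => Real.exp (-μ * Z σ) *
        (-μ * Z σ - Real.log ((Real.exp (-μ * Z σ) + Real.exp (-μ * Z (flipAt σ i))) / 2)))
    have e2 := sum_flipAt i (fun σ =>
      Real.exp (-μ * Z σ) * (C * (max (Z σ - Z (flipAt σ i)) 0) ^ 2))
    simp only [flipAt_flipAt] at e1 e2
    have := Finset.sum_le_sum (s := Finset.univ) fun σ _ => pair σ i
    rw [Finset.sum_add_distrib, Finset.sum_add_distrib, e1, e2] at this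
    linarith
  rw [Finset.sum_comm]
  refine (Finset.sum_le_sum fun i _ => swap i).trans ?_
  rw [Finset.sum_comm, Finset.mul_sum]
  refine Finset.sum_le_sum fun σ _ => ?_
  rw [← Finset.mul_sum, ← Finset.mul_sum, mul_comm]
  refine mul_le_mul_of_nonneg_right ?_ (Real.exp_pos _).le
  calc C * ∑ i, (max (Z σ - Z (flipAt σ i)) 0) ^ 2 ≤ C * (4 * v) :=
        mul_le_mul_of_nonneg_left (hv σ) (by positivity)
    _ = v * μ ^ 2 / (1 - μ * z) ^ 2 := by rw [hC]; ring

/-! ### From entropy to a lower tail -/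

/-- Herbst's argument: integrating the entropy bound gives the Laplace transform of `-Z`. The
function `μ ↦ log E[e^{-μZ}] / μ - v μ / (1 - μ z)` is antitone and tends to `-E[Z]` at `0+`. -/
lemma laplace_bound {N : ℕ} (Z : (Fin N → Bool) → ℝ) {z v : ℝ}
    (hd : ∀ σ i, Z σ - Z (flipAt σ i) ≤ 2 * z)
    (hv : ∀ σ, ∑ i, (max (Z σ - Z (flipAt σ i)) 0) ^ 2 ≤ 4 * v)
    (hz : 0 ≤ z) {μ : ℝ} (hμ : 0 < μ) (hμz : μ * z < 1) :
    ∑ σ, Real.exp (-μ * Z σ) ≤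
      2 ^ N * Real.exp (-μ * ((∑ σ, Z σ) / 2 ^ N) + v * μ ^ 2 / (1 - μ * z)) := by
  set M : ℝ → ℝ := fun s => ∑ σ, Real.exp (-s * Z σ) with hM
  set D : ℝ → ℝ := fun s => ∑ σ, Real.exp (-s * Z σ) * (-Z σ) with hD
  set Λ : ℝ → ℝ := fun s => Real.log (M s / 2 ^ N) with hΛ
  have hMpos : ∀ s, 0 < M s := fun s =>
    Finset.sum_pos (fun σ _ => Real.exp_pos _) Finset.univ_nonempty
  have dM : ∀ s, HasDerivAt M (D s) s := by
    intro s
    apply HasDerivAt.fun_sum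
    intro σ _
    have := ((hasDerivAt_id s).neg.mul_const (Z σ)).exp
    simpa using this
  have dΛ : ∀ s, HasDerivAt Λ (D s / M s) s := by
    intro s
    have := ((dM s).div_const (2 ^ N)).log (by have := hMpos s; positivity)
    convert this using 1
    field_simp
  set G : ℝ → ℝ := fun s => s⁻¹ * Λ s - v * (s / (1 - s * z)) with hG
  have hpos : ∀ s ∈ Set.Ioc 0 μ, 0 < s ∧ 0 < 1 - s * z := by
    intro s hs
    refine ⟨hs.1, ?_⟩
    have := mul_le_mul_of_nonneg_right hs.2 hz
    linarith
  have dG : ∀ s ∈ Set.Ioc 0 μ, HasDerivAt G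
      (-(s ^ 2)⁻¹ * Λ s + s⁻¹ * (D s / M s) - v * ((1 * (1 - s * z) - s * (-(1 * z))) /
        (1 - s * z) ^ 2)) s := by
    intro s hs
    obtain ⟨h0, h1⟩ := hpos s hs
    exact ((hasDerivAt_inv h0.ne').mul (dΛ s)).sub (((hasDerivAt_id s).div
      (((hasDerivAt_id s).mul_const z).const_sub 1) h1.ne').const_mul v)
  have hanti : AntitoneOn G (Set.Ioc 0 μ) := by
    apply antitoneOn_of_deriv_nonpos (convex_Ioc 0 μ)
    · exact fun s hs => (dG s hs).continuousAt.continuousWithinAt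
    · rw [interior_Ioc]
      exact fun s hs => (dG s ⟨hs.1, hs.2.le⟩).differentiableAt.differentiableWithinAt
    · rw [interior_Ioc]
      intro s hs
      obtain ⟨h0, h1⟩ := hpos s ⟨hs.1, hs.2.le⟩
      rw [(dG s ⟨hs.1, hs.2.le⟩).deriv]
      have he := entropy_exp_bound Z hd hv hz h0 (by linarith)
      have hM' := hMpos s
      have he1 : ∑ σ, Real.exp (-s * Z σ) * (-s * Z σ) = s * D s := by
        rw [hD, Finset.mul_sum]
        exact Finset.sum_congr rfl fun σ _ => by ring
      rw [he1] at he
      change s * D s - M s * Λ s ≤ v * s ^ 2 / (1 - s * z) ^ 2 * M s at he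
      have : -(s ^ 2)⁻¹ * Λ s + s⁻¹ * (D s / M s) - v * ((1 * (1 - s * z) - s * (-(1 * z))) /
        (1 - s * z) ^ 2) =
          ((s * D s - M s * Λ s) - v * s ^ 2 / (1 - s * z) ^ 2 * M s) / (s ^ 2 * M s) := by
        field_simp
        ring
      rw [this]
      exact div_nonpos_of_nonpos_of_nonneg (by linarith) (by positivity)
  have hM0 : M 0 = 2 ^ N := by simp [hM]
  have hΛ0 : Λ 0 = 0 := by simp [hΛ, hM0]
  have hlim : Filter.Tendsto G (nhdsWithin 0 (Set.Ioi 0)) (nhds (-((∑ σ, Z σ) / 2 ^ N))) := by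
    have t1 := (hasDerivAt_iff_tendsto_slope_zero.mp (dΛ 0)).mono_left
      (nhdsWithin_mono 0 (show Set.Ioi (0 : ℝ) ⊆ {0}ᶜ from fun x hx => ne_of_gt hx))
    simp only [zero_add, hΛ0, sub_zero, smul_eq_mul, hM0] at t1
    have t2 : ContinuousAt (fun s : ℝ => v * (s / (1 - s * z))) 0 := by
      refine continuousAt_const.mul (continuousAt_id.div (by fun_prop) (by simp))
    have t3 := t1.sub (t2.tendsto.mono_left nhdsWithin_le_nhds)
    convert t3 using 2
    simp [hD, neg_div]
  have hle : G μ ≤ -((∑ σ, Z σ) / 2 ^ N) := by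
    refine ge_of_tendsto hlim ?_
    filter_upwards [Ioc_mem_nhdsGT hμ] with s hs
    exact hanti hs ⟨hμ, le_rfl⟩ hs.2
  have hΛμ : Λ μ ≤ -μ * ((∑ σ, Z σ) / 2 ^ N) + v * μ ^ 2 / (1 - μ * z) := by
    have h1 := mul_le_mul_of_nonneg_left hle hμ.le
    have h2 : μ * G μ = Λ μ - v * μ ^ 2 / (1 - μ * z) := by
      simp only [hG]
      field_simp
    linarith
  have h3 : M μ = 2 ^ N * Real.exp (Λ μ) := by
    rw [hΛ, Real.exp_log (by have := hMpos μ; positivity)]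
    field_simp
  change M μ ≤ _
  rw [h3]
  gcongr

/-- Lower tail in counting form: if `Z ≥ 0` has mean `E`, then at most a fraction `e^{-L}` of the
sign vectors satisfy `Z < E - t`, where `t = 2 √((zE + v) L)`. Only `t ≤ E` matters since `Z ≥ 0`,
which is why the linear term `z t` of a Bernstein bound may be replaced by `z E`. -/
lemma lower_tail {N : ℕ} (Z : (Fin N → Bool) → ℝ) {z v E L : ℝ}
    (hd : ∀ σ i, Z σ - Z (flipAt σ i) ≤ 2 * z)
    (hv : ∀ σ, ∑ i, (max (Z σ - Z (flipAt σ i)) 0) ^ 2 ≤ 4 * v)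
    (hz : 0 < z) (hv0 : 0 ≤ v) (hZ : ∀ σ, 0 ≤ Z σ) (hE : E = (∑ σ, Z σ) / 2 ^ N) (hE0 : 0 < E)
    (hL : 0 < L) (B : Finset (Fin N → Bool))
    (hB : ∀ σ ∈ B, Z σ < E ∧ 4 * (z * E + v) * L < (E - Z σ) ^ 2) :
    (B.card : ℝ) ≤ Real.exp (-L) * 2 ^ N := by
  rcases B.eq_empty_or_nonempty with rfl | ⟨σ₀, hσ₀⟩
  · simp; positivity
  set q := z * E + v with hq
  have hqpos : 0 < q := by positivity
  set t := Real.sqrt (4 * q * L) with ht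
  have htpos : 0 < t := Real.sqrt_pos.mpr (by positivity)
  have ht2 : t ^ 2 = 4 * q * L := Real.sq_sqrt (by positivity)
  have hBt : ∀ σ ∈ B, t < E - Z σ := by
    intro σ hσ
    obtain ⟨h1, h2⟩ := hB σ hσ
    exact (Real.sqrt_lt' (by linarith)).mpr h2
  have htE : t ≤ E := by linarith [hBt σ₀ hσ₀, hZ σ₀]
  set μ := t / (2 * q) with hμ
  have hμpos : 0 < μ := by positivity
  have hztE : z * t ≤ z * E := mul_le_mul_of_nonneg_left htE hz.le
  have hμz : μ * z < 1 := by
    rw [hμ, div_mul_eq_mul_div, div_lt_one (by positivity)]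
    nlinarith [mul_pos hz hE0]
  have hlap := laplace_bound Z hd hv hz.le hμpos hμz
  rw [← hE] at hlap
  have hchern : (B.card : ℝ) * Real.exp (-μ * (E - t)) ≤ ∑ σ, Real.exp (-μ * Z σ) := by
    calc (B.card : ℝ) * Real.exp (-μ * (E - t)) = ∑ σ ∈ B, Real.exp (-μ * (E - t)) := by simp
      _ ≤ ∑ σ ∈ B, Real.exp (-μ * Z σ) := by
          refine Finset.sum_le_sum fun σ hσ => Real.exp_le_exp.mpr ?_
          nlinarith [hBt σ hσ]
      _ ≤ _ := Finset.sum_le_sum_of_subset_of_nonneg (Finset.subset_univ _)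
          fun _ _ _ => (Real.exp_pos _).le
  have hexp : v * μ ^ 2 / (1 - μ * z) - μ * t ≤ -L := by
    have h1 : 0 < 2 * q - t * z := by nlinarith [mul_pos hz hE0]
    have h2 : v * μ ^ 2 / (1 - μ * z) = v * t ^ 2 / (2 * q * (2 * q - t * z)) := by
      have : 1 - μ * z = (2 * q - t * z) / (2 * q) := by rw [hμ]; field_simp
      rw [this, hμ]
      field_simp
    have h3 : v * t ^ 2 / (2 * q * (2 * q - t * z)) ≤ L := by
      rw [div_le_iff₀ (by positivity), ht2]
      have : 0 ≤ q * L * (2 * (2 * q - t * z) - 4 * v) := by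
        apply mul_nonneg (by positivity)
        nlinarith [mul_pos hz hE0]
      nlinarith
    have h4 : μ * t = 2 * L := by
      rw [hμ, div_mul_eq_mul_div, ← sq, ht2]; field_simp; ring
    rw [h2, h4]
    linarith
  have hfin : (B.card : ℝ) * Real.exp (-μ * (E - t)) ≤
      Real.exp (-L) * 2 ^ N * Real.exp (-μ * (E - t)) := by
    refine (hchern.trans hlap).trans ?_
    rw [mul_comm (Real.exp (-L)), mul_assoc, ← Real.exp_add]
    refine mul_le_mul_of_nonneg_left (Real.exp_le_exp.mpr ?_) (by positivity)
    linarith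
  exact le_of_mul_le_mul_right hfin (Real.exp_pos _)

/-! ### The Rademacher suprema -/

/-- One row of the unnormalised average: `sup_{f∈F} Σ_k ρ_k f(s_k)`. -/
def rowSup {X ι : Type*} (f : ι → X → ℝ) {m : ℕ} (S : Fin m → X) (ρ : Fin m → Bool) : ℝ :=
  ⨆ l : ι, ∑ k : Fin m, sgnB (ρ k) * f l (S k)

lemma abs_sgnB (x : Bool) : |sgnB x| = 1 := by cases x <;> simp [sgnB]

lemma abs_signed_sum_le {m : ℕ} (ρ : Fin m → Bool) {g : Fin m → ℝ} {K : ℝ}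
    (hg : ∀ k, |g k| ≤ K) : |∑ k, sgnB (ρ k) * g k| ≤ m * K := by
  refine (Finset.abs_sum_le_sum_abs _ _).trans ?_
  calc ∑ k, |sgnB (ρ k) * g k| ≤ ∑ _k : Fin m, K :=
        Finset.sum_le_sum fun k _ => by rw [abs_mul, abs_sgnB, one_mul]; exact hg k
    _ = m * K := by simp

section rows

variable {X ι : Type*} {f : ι → X → ℝ} {m : ℕ} {S : Fin m → X} {K : ℝ}

lemma bddAbove_row (hK : ∀ l x, |f l x| ≤ K) (ρ : Fin m → Bool) :
    BddAbove (Set.range fun l : ι => ∑ k : Fin m, sgnB (ρ k) * f l (S k)) := by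
  refine ⟨m * K, ?_⟩
  rintro _ ⟨l, rfl⟩
  exact (le_abs_self _).trans (abs_signed_sum_le ρ fun k => hK l _)

lemma abs_le_zhat (hK : ∀ l x, |f l x| ≤ K) (l : ι) (k : Fin m) : |f l (S k)| ≤ zhat f S :=
  le_ciSup (f := fun p : ι × Fin m => |f p.1 (S p.2)|)
    ⟨K, by rintro _ ⟨p, rfl⟩; exact hK _ _⟩ (l, k)

lemma sum_sq_le (hK : ∀ l x, |f l x| ≤ K) (l : ι) :
    ∑ k, f l (S k) ^ 2 ≤ ⨆ l : ι, ∑ k : Fin m, (f l (S k)) ^ 2 := by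
  refine le_ciSup (f := fun l : ι => ∑ k : Fin m, (f l (S k)) ^ 2) ⟨m * K ^ 2, ?_⟩ l
  rintro _ ⟨l, rfl⟩
  calc ∑ k, f l (S k) ^ 2 ≤ ∑ _k : Fin m, K ^ 2 :=
        Finset.sum_le_sum fun k _ => by
          rw [← sq_abs]; exact pow_le_pow_left₀ (abs_nonneg _) (hK _ _) 2
    _ = m * K ^ 2 := by simp

lemma rowSup_nonneg (hK : ∀ l x, |f l x| ≤ K) (hzero : ∃ l₀ : ι, ∀ x : X, f l₀ x = 0)
    (ρ : Fin m → Bool) : 0 ≤ rowSup f S ρ := by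
  obtain ⟨l₀, h₀⟩ := hzero
  have := le_ciSup (bddAbove_row (S := S) hK ρ) l₀
  simp only [h₀, mul_zero, Finset.sum_const_zero] at this
  exact this

lemma rowSup_le [Nonempty ι] (hK : ∀ l x, |f l x| ≤ K) (ρ : Fin m → Bool) :
    rowSup f S ρ ≤ m * zhat f S :=
  ciSup_le fun l => (le_abs_self _).trans (abs_signed_sum_le ρ fun k => abs_le_zhat hK l k)

/-- A near-maximiser of the row controls the decrease caused by every single flip at once. -/
lemma exists_jump_le [Nonempty ι] (hK : ∀ l x, |f l x| ≤ K) (ρ : Fin m → Bool) {ε : ℝ}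
    (hε : 0 < ε) :
    ∃ l : ι, ∀ i, rowSup f S ρ - rowSup f S (flipAt ρ i) ≤ 2 * |f l (S i)| + ε := by
  obtain ⟨l, hl⟩ := exists_lt_of_lt_ciSup (show rowSup f S ρ - ε < rowSup f S ρ by linarith)
  refine ⟨l, fun i => ?_⟩
  have h1 : ∑ k, sgnB (flipAt ρ i k) * f l (S k) ≤ rowSup f S (flipAt ρ i) :=
    le_ciSup (bddAbove_row (S := S) hK (flipAt ρ i)) l
  have h2 : ∑ k, sgnB (ρ k) * f l (S k) - ∑ k, sgnB (flipAt ρ i k) * f l (S k) =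
      2 * (sgnB (ρ i) * f l (S i)) := by
    rw [← Finset.sum_sub_distrib, Finset.sum_eq_single i]
    · cases h : ρ i <;> simp [flipAt, h, sgnB] <;> ring
    · intro k _ hk
      simp [flipAt, hk]
    · simp
  have h3 : sgnB (ρ i) * f l (S i) ≤ |f l (S i)| := by
    refine (le_abs_self _).trans ?_
    rw [abs_mul, abs_sgnB, one_mul]
  linarith

lemma row_jump_le [Nonempty ι] (hK : ∀ l x, |f l x| ≤ K) (ρ : Fin m → Bool) (i : Fin m) :
    rowSup f S ρ - rowSup f S (flipAt ρ i) ≤ 2 * zhat f S := by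
  refine le_of_forall_pos_le_add fun ε hε => ?_
  obtain ⟨l, hl⟩ := exists_jump_le (S := S) hK ρ hε
  linarith [hl i, abs_le_zhat (S := S) hK l i]

lemma row_sum_sq_jump_le [Nonempty ι] (hK : ∀ l x, |f l x| ≤ K) (ρ : Fin m → Bool) :
    ∑ i, (max (rowSup f S ρ - rowSup f S (flipAt ρ i)) 0) ^ 2 ≤
      4 * ⨆ l : ι, ∑ k : Fin m, (f l (S k)) ^ 2 := by
  set W := ⨆ l : ι, ∑ k : Fin m, (f l (S k)) ^ 2 with hW
  have hbound : ∀ ε : ℝ, 0 < ε →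
      ∑ i, (max (rowSup f S ρ - rowSup f S (flipAt ρ i)) 0) ^ 2 ≤
        4 * W + m * (4 * K * ε + ε ^ 2) := by
    intro ε hε
    obtain ⟨l, hl⟩ := exists_jump_le (S := S) hK ρ hε
    calc ∑ i, (max (rowSup f S ρ - rowSup f S (flipAt ρ i)) 0) ^ 2
        ≤ ∑ i, (4 * f l (S i) ^ 2 + (4 * K * ε + ε ^ 2)) := by
          refine Finset.sum_le_sum fun i _ => ?_
          have h0 : 0 ≤ |f l (S i)| := abs_nonneg _
          have h1 : max (rowSup f S ρ - rowSup f S (flipAt ρ i)) 0 ≤ 2 * |f l (S i)| + ε :=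
            max_le (hl i) (by positivity)
          have h2 := pow_le_pow_left₀ (le_max_right _ _) h1 2
          have h3 := mul_le_mul_of_nonneg_right (hK l (S i)) hε.le
          have h4 := sq_abs (f l (S i))
          nlinarith
      _ = 4 * ∑ i, f l (S i) ^ 2 + m * (4 * K * ε + ε ^ 2) := by
          rw [Finset.sum_add_distrib, ← Finset.mul_sum]; simp; ring
      _ ≤ _ := by linarith [sum_sq_le (S := S) hK l]
  have hlim : Filter.Tendsto (fun ε : ℝ => 4 * W + m * (4 * K * ε + ε ^ 2))
      (nhdsWithin 0 (Set.Ioi 0)) (nhds (4 * W)) := by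
    have : Continuous (fun ε : ℝ => 4 * W + m * (4 * K * ε + ε ^ 2)) := by fun_prop
    have h := (this.tendsto 0).mono_left (nhdsWithin_le_nhds (s := Set.Ioi 0))
    simpa using h
  exact ge_of_tendsto hlim (Filter.eventually_of_mem self_mem_nhdsWithin hbound)

end rows

/-- Sign matrices as sign vectors of length `n * m`. -/
def matEquiv (n m : ℕ) : (Fin (n * m) → Bool) ≃ (Fin n → Fin m → Bool) :=
  (Equiv.arrowCongr finProdFinEquiv.symm (Equiv.refl Bool)).trans (Equiv.curry _ _ _)

lemma matEquiv_apply {n m : ℕ} (τ : Fin (n * m) → Bool) (j : Fin n) (k : Fin m) :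
    matEquiv n m τ j k = τ (finProdFinEquiv (j, k)) := rfl

/-- Flipping an entry only changes the row it lies in. -/
lemma gup_jump {X ι : Type*} (f : ι → X → ℝ) {n m : ℕ} (S : Fin m → X)
    (τ : Fin (n * m) → Bool) (j : Fin n) (k : Fin m) :
    gup f S (matEquiv n m τ) - gup f S (matEquiv n m (flipAt τ (finProdFinEquiv (j, k)))) =
      rowSup f S (matEquiv n m τ j) - rowSup f S (flipAt (matEquiv n m τ j) k) := by
  have hrow : ∀ j', matEquiv n m (flipAt τ (finProdFinEquiv (j, k))) j' =
      if j' = j then flipAt (matEquiv n m τ j) k else matEquiv n m τ j' := by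
    intro j'
    ext k'
    rw [matEquiv_apply]
    by_cases hj : j' = j
    · subst hj
      by_cases hk : k' = k
      · subst hk; simp [flipAt, matEquiv_apply]
      · simp [flipAt, matEquiv_apply, hk]
    · simp [flipAt, matEquiv_apply, hj]
  change ∑ j', rowSup f S _ - ∑ j', rowSup f S _ = _
  rw [← Finset.sum_sub_distrib, Finset.sum_eq_single j]
  · rw [hrow, if_pos rfl]
  · intro j' _ hj
    rw [hrow, if_neg hj, sub_self]
  · simp

lemma mcera_eq_gup {X ι : Type*} (f : ι → X → ℝ) (n m : ℕ) (S : Fin m → X)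
    (σ : Fin n → Fin m → Bool) : mcera f n m S σ = gup f S σ / ((n : ℝ) * m) := by
  simp only [mcera, gup]
  simp_rw [← Real.mul_iSup_of_nonneg (show (0 : ℝ) ≤ (m : ℝ)⁻¹ by positivity)]
  rw [← Finset.mul_sum, div_eq_mul_inv, mul_inv]
  ring

lemma card_matrices (n m : ℕ) : (Fintype.card (Fin n → Fin m → Bool) : ℝ) = 2 ^ (n * m) := by
  rw [← Fintype.card_congr (matEquiv n m)]
  simp

lemma era_eq {X ι : Type*} (f : ι → X → ℝ) (n m : ℕ) (S : Fin m → X) :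
    era f n m S =
      ((∑ τ, gup f S (matEquiv n m τ)) / 2 ^ (n * m)) / ((n : ℝ) * m) := by
  rw [era, radMeasure, PMF.integral_eq_sum]
  simp only [PMF.uniformOfFintype_apply, ENNReal.toReal_inv, ENNReal.toReal_natCast, smul_eq_mul,
    card_matrices, mcera_eq_gup]
  rw [← Finset.mul_sum, ← Finset.sum_div, Equiv.sum_comp (matEquiv n m) (fun σ => gup f S σ)]
  field_simp

/-- Contrapositive of solving the quadratic inequality `(x - y)² ≤ 2 A x + s` for `x`. -/
lemma quadratic_violation {x y A s : ℝ} (hA : 0 ≤ A) (hrad : 0 ≤ A ^ 2 + (2 * A * y + s))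
    (h : y + A + Real.sqrt (A ^ 2 + (2 * A * y + s)) < x) :
    y < x ∧ 2 * A * x + s < (x - y) ^ 2 := by
  have h0 := Real.sqrt_nonneg (A ^ 2 + (2 * A * y + s))
  have h1 := Real.sq_sqrt hrad
  refine ⟨by linarith, ?_⟩
  nlinarith

theorem stmt_8 {X : Type*} [MeasurableSpace X] {ι : Type*} [Countable ι]
    (f : ι → X → ℝ) (a b : ℝ) (ha : a ≤ 0) (hb : 0 < b)
    (hmeas : ∀ l : ι, Measurable (f l))
    (hrange : ∀ (l : ι) (x : X), f l x ∈ Set.Icc a b)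
    (hzero : ∃ l₀ : ι, ∀ x : X, f l₀ x = 0)
    (n m : ℕ) (hn : 0 < n) (hm : 0 < m) (S : Fin m → X)
    (δ : ℝ) (hδ : δ ∈ Set.Ioo (0 : ℝ) 1) :
    1 - δ ≤ (radMeasure n m
        {σ : Fin n → Fin m → Bool | era f n m S ≤ mcera f n m S σ +
          2 * zhat f S * Real.log (1 / δ) / ((n : ℝ) * (m : ℝ)) +
          Real.sqrt ((2 * zhat f S * Real.log (1 / δ) / ((n : ℝ) * (m : ℝ))) ^ 2 +
            4 * (zhat f S * mcera f n m S σ + sigma2hat f S) * Real.log (1 / δ) /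
              ((n : ℝ) * (m : ℝ)))}).toReal := by
  classical
  obtain ⟨hδ0, hδ1⟩ := hδ
  have hK : ∀ l x, |f l x| ≤ max (-a) b := fun l x => by
    obtain ⟨h1, h2⟩ := hrange l x
    exact abs_le.mpr ⟨by linarith [le_max_left (-a) b], h2.trans (le_max_right _ _)⟩
  have : Nonempty ι := ⟨hzero.choose⟩
  set L := Real.log (1 / δ) with hL
  have hLpos : 0 < L := Real.log_pos (by rw [lt_div_iff₀ hδ0]; linarith)
  have hexpL : Real.exp (-L) = δ := by
    rw [hL, one_div, Real.log_inv, neg_neg, Real.exp_log hδ0]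
  set z := zhat f S with hz
  set W := ⨆ l : ι, ∑ k : Fin m, (f l (S k)) ^ 2 with hW
  have hW0 : 0 ≤ W := Real.iSup_nonneg fun l => Finset.sum_nonneg fun k _ => sq_nonneg _
  have hz0 : 0 ≤ z := Real.iSup_nonneg fun p => abs_nonneg _
  have hn' : (0 : ℝ) < n := by exact_mod_cast hn
  have hm' : (0 : ℝ) < m := by exact_mod_cast hm
  set Z : (Fin (n * m) → Bool) → ℝ := fun τ => gup f S (matEquiv n m τ) with hZ
  set E := (∑ τ, Z τ) / 2 ^ (n * m) with hE
  have hZ0 : ∀ τ, 0 ≤ Z τ := fun τ => Finset.sum_nonneg fun j _ => rowSup_nonneg hK hzero _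
  have hZle : ∀ τ, Z τ ≤ n * (m * z) := fun τ => by
    calc Z τ ≤ ∑ _j : Fin n, (m * z) := Finset.sum_le_sum fun j _ => rowSup_le hK _
      _ = n * (m * z) := by simp
  have hE0 : 0 ≤ E := div_nonneg (Finset.sum_nonneg fun τ _ => hZ0 τ) (by positivity)
  have hEle : E ≤ n * (m * z) := by
    rw [hE, div_le_iff₀ (by positivity)]
    calc ∑ τ, Z τ ≤ ∑ _τ : Fin (n * m) → Bool, n * (m * z) :=
          Finset.sum_le_sum fun τ _ => hZle τ
      _ = n * (m * z) * 2 ^ (n * m) := by simp; ring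
  set good := {σ : Fin n → Fin m → Bool | era f n m S ≤ mcera f n m S σ +
          2 * z * L / ((n : ℝ) * (m : ℝ)) +
          Real.sqrt ((2 * z * L / ((n : ℝ) * (m : ℝ))) ^ 2 +
            4 * (z * mcera f n m S σ + sigma2hat f S) * L / ((n : ℝ) * (m : ℝ)))} with hgood
  set B : Finset (Fin (n * m) → Bool) := Finset.univ.filter fun τ => matEquiv n m τ ∉ good with hB
  have hBad : ∀ τ ∈ B, Z τ < E ∧ 4 * (z * E + n * W) * L < (E - Z τ) ^ 2 := by
    intro τ hτ
    have hτ' := (Finset.mem_filter.mp hτ).2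
    simp only [hgood, Set.mem_ofPred_eq, not_le] at hτ'
    rw [era_eq, mcera_eq_gup] at hτ'
    change Z τ / (n * m) + _ + _ < E / (n * m) at hτ'
    set c : ℝ := (n : ℝ) * m with hc
    have hcpos : 0 < c := by positivity
    have hrw : 4 * (z * (gup f S (matEquiv n m τ) / c) + sigma2hat f S) * L / c =
        2 * (2 * z * L / c) * (Z τ / c) + 4 * (n * W) * L / c ^ 2 := by
      rw [sigma2hat, ← hW, hc]
      simp only [hZ]
      field_simp
      ring
    rw [hrw] at hτ'
    have hZτ := hZ0 τ
    obtain ⟨h1, h2⟩ := quadratic_violation (by positivity) (by positivity) hτ'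
    refine ⟨(div_lt_div_iff_of_pos_right hcpos).mp h1, ?_⟩
    have h3 : 2 * (2 * z * L / c) * (E / c) + 4 * (n * W) * L / c ^ 2 =
        4 * (z * E + n * W) * L / c ^ 2 := by
      field_simp
      ring
    have h4 : (E / c - Z τ / c) ^ 2 = (E - Z τ) ^ 2 / c ^ 2 := by field_simp
    rw [h3, h4] at h2
    exact (div_lt_div_iff_of_pos_right (by positivity)).mp h2
  have hcard : (B.card : ℝ) ≤ δ * 2 ^ (n * m) := by
    rcases hE0.eq_or_lt with hE' | hE'
    · have : B = ∅ := Finset.eq_empty_of_forall_notMem fun τ hτ => by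
        linarith [(hBad τ hτ).1, hZ0 τ]
      rw [this]; simp; positivity
    · have hzpos : 0 < z := by
        rcases hz0.eq_or_lt with h | h
        · rw [← h] at hEle; simp at hEle; linarith
        · exact h
      rw [← hexpL]
      refine lower_tail Z (z := z) (v := n * W) ?_ ?_ hzpos (by positivity) hZ0 hE hE' hLpos B hBad
      · intro τ i
        obtain ⟨⟨j, k⟩, rfl⟩ := finProdFinEquiv.surjective i
        rw [hZ, gup_jump]
        exact row_jump_le hK _ _
      · intro τ
        rw [← Equiv.sum_comp finProdFinEquiv, Fintype.sum_prod_type]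
        simp only [hZ, gup_jump]
        calc _ ≤ ∑ _j : Fin n, 4 * W := Finset.sum_le_sum fun j _ => row_sum_sq_jump_le hK _
          _ = 4 * (n * W) := by simp; ring
  rw [radMeasure, PMF.toMeasure_uniformOfFintype_apply _ (Set.toFinite good).measurableSet,
    ENNReal.toReal_div, ENNReal.toReal_natCast, ENNReal.toReal_natCast, card_matrices,
    le_div_iff₀ (by positivity)]
  have hBc : B.card + Fintype.card good = 2 ^ (n * m) := by
    have h1 : Fintype.card good = (Finset.univ.filter fun τ => matEquiv n m τ ∈ good).card := by
      rw [← Fintype.card_subtype]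
      exact (Fintype.card_congr ((matEquiv n m).subtypeEquiv fun τ => Iff.rfl)).symm
    rw [h1, hB, add_comm, Finset.card_filter_add_card_filter_not]
    simp
  have hBc' : (B.card : ℝ) + (Fintype.card good : ℝ) = 2 ^ (n * m) := by exact_mod_cast hBc
  linarith
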